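/- The sesquilinear form (σ, μ) ↦ (Aσ, μ)_Γ on M is Hermitian: (Aσ, μ)_Γ = \overline{(Aμ, σ)_Γ} for all σ, μ ∈ M. Equivalently, if 𝙰 denotes the N×N matrix of A in the basis of indicator functions of the elements and 𝙷 = diag(l_1, …, l_N), then the matrix 𝙷𝙰 is symmetric, even though 𝙰 itself is in general not symmetric. -/

import Mathlib

/-- The operator `A : M → M` on piecewise constants (identified with their value vectors
`c : Fin N → ℂ`, indices mod `N`): `(Aσ)|_{τ_i} = c_i − ((c_{i+1} − c_i)/l_i² − (c_i − c_{i−1})/(l_i l_{i−1}))`. -/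
noncomputable def Aop {N : ℕ} [NeZero N] (l : Fin N → ℝ) (c : Fin N → ℂ) : Fin N → ℂ :=
  fun i => c i - ((c (i + 1) - c i) / (l i : ℂ) ^ 2
    - (c i - c (i - 1)) / ((l i : ℂ) * (l (i - 1) : ℂ)))

/-- The `L²(0,L)` inner product of two piecewise constants with value vectors `c, d`:
`(σ, μ)_Γ = ∫₀^L σ \overline{μ} ds = ∑ i, c_i \overline{d_i} l_i`. -/
noncomputable def ipGamma {N : ℕ} (l : Fin N → ℝ) (c d : Fin N → ℂ) : ℂ :=
  ∑ i, c i * (starRingEnd ℂ) (d i) * (l i : ℂ)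

/-!
Let `D` be the difference quotient operator `(Dσ)|_{τ_i} = (c_{i+1} − c_i) / l_i`. On `τ_i`,
`Aσ - σ` is `-1 / l_i` times the backward difference of `Dσ`, so summation by parts around
the closed curve gives `(Aσ, μ)_Γ = (σ, μ)_Γ + (Dσ, Dμ)_Γ`, that is,
`A = 1 + D*D`, which is visibly Hermitian.
-/

theorem sum_sub_shift_mul_eq_neg_sum_mul_shift_sub {G R : Type*} [AddGroup G] [Fintype G]
    [NonUnitalNonAssocRing R] (a : G) (f g : G → R) :
    ∑ i, (f i - f (i - a)) * g i = -∑ i, f i * (g (i + a) - g i) := by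
  have shift : ∑ i, f (i - a) * g i = ∑ i, f i * g (i + a) := by
    simpa using (Equiv.sum_comp (Equiv.addRight a) fun i => f (i - a) * g i).symm
  simp only [sub_mul, mul_sub, Finset.sum_sub_distrib, shift, neg_sub]

theorem conj_ipGamma {N : ℕ} (l : Fin N → ℝ) (c d : Fin N → ℂ) :
    (starRingEnd ℂ) (ipGamma l c d) = ipGamma l d c := by
  simp only [ipGamma, map_sum, map_mul, Complex.conj_conj, Complex.conj_ofReal,
    mul_comm ((starRingEnd ℂ) _)]

section DiffQuot

variable {N : ℕ} [NeZero N]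

/-- The forward difference quotient of a piecewise constant function with value vector `c`, with
indices mod `N`. It is the operator `D` for which `A = 1 + D*D` in the inner product `ipGamma l`. -/
noncomputable def diffQuot (l : Fin N → ℝ) (c : Fin N → ℂ) : Fin N → ℂ :=
  fun i => (c (i + 1) - c i) / (l i : ℂ)

theorem diffQuot_mul_length {l : Fin N → ℝ} {i : Fin N} (hl : l i ≠ 0) (c : Fin N → ℂ) :
    diffQuot l c i * (l i : ℂ) = c (i + 1) - c i :=
  div_mul_cancel₀ _ (Complex.ofReal_ne_zero.mpr hl)

theorem Aop_mul_length {l : Fin N → ℝ} {i : Fin N} (hl : l i ≠ 0) (c : Fin N → ℂ) :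
    Aop l c i * (l i : ℂ) = c i * (l i : ℂ) - (diffQuot l c i - diffQuot l c (i - 1)) := by
  have hl' : (l i : ℂ) ≠ 0 := Complex.ofReal_ne_zero.mpr hl
  simp only [Aop, diffQuot, sub_add_cancel]
  field_simp

theorem ipGamma_diffQuot_diffQuot {l : Fin N → ℝ} (hl : ∀ i, l i ≠ 0) (c d : Fin N → ℂ) :
    ipGamma l (diffQuot l c) (diffQuot l d) =
      ∑ i, diffQuot l c i * ((starRingEnd ℂ) (d (i + 1)) - (starRingEnd ℂ) (d i)) := by
  refine Finset.sum_congr rfl fun i _ => ?_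
  rw [← map_sub, ← diffQuot_mul_length (hl i) d, map_mul, Complex.conj_ofReal, mul_assoc]

theorem ipGamma_Aop {l : Fin N → ℝ} (hl : ∀ i, l i ≠ 0) (c d : Fin N → ℂ) :
    ipGamma l (Aop l c) d = ipGamma l c d + ipGamma l (diffQuot l c) (diffQuot l d) := by
  calc ipGamma l (Aop l c) d
      = ∑ i, (c i * (starRingEnd ℂ) (d i) * (l i : ℂ)
          - (diffQuot l c i - diffQuot l c (i - 1)) * (starRingEnd ℂ) (d i)) := by
        refine Finset.sum_congr rfl fun i _ => ?_
        rw [mul_right_comm, Aop_mul_length (hl i), sub_mul, mul_right_comm]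
    _ = ipGamma l c d
          - ∑ i, (diffQuot l c i - diffQuot l c (i - 1)) * (starRingEnd ℂ) (d i) :=
        Finset.sum_sub_distrib _ _
    _ = ipGamma l c d + ipGamma l (diffQuot l c) (diffQuot l d) := by
        rw [sum_sub_shift_mul_eq_neg_sum_mul_shift_sub 1 _ fun i => (starRingEnd ℂ) (d i),
          sub_neg_eq_add, ipGamma_diffQuot_diffQuot hl]

end DiffQuot

/-- The sesquilinear form `(σ, μ) ↦ (Aσ, μ)_Γ` on `M` is Hermitian:
`(Aσ, μ)_Γ = \overline{(Aμ, σ)_Γ}` for all `σ, μ ∈ M` (equivalently, the matrix `𝙷𝙰` is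
symmetric, where `𝙰` is the matrix of `A` in the indicator basis and `𝙷 = diag(l₁,…,l_N)`). -/
theorem stmt_3 (L : ℝ) (hL : 0 < L) (N : ℕ) [NeZero N] (hN : 2 ≤ N)
    (l : Fin N → ℝ) (hl : ∀ i, 0 < l i) (hsum : ∑ i, l i = L)
    (c d : Fin N → ℂ) :
    ipGamma l (Aop l c) d = (starRingEnd ℂ) (ipGamma l (Aop l d) c) := by
  have hl_ne : ∀ i, l i ≠ 0 := fun i => (hl i).ne'
  rw [ipGamma_Aop hl_ne, ipGamma_Aop hl_ne, map_add, conj_ipGamma, conj_ipGamma]
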